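/- arXiv:1906.04453 — 2 statements merged into one kernel-verified Lean document; each statement's English description precedes it below -/
import Mathlib

section
/- Let p > q ≥ 1 be integers, let Δn ≥ 3 be an integer, and let β be a real number with β_0(Δn) < β ≤ β_{-1/4}(Δn), where β_0(Δn) = ((Δn)^{2q} - 1)/((Δn)^{2p} - 1) and β_{-1/4}(Δn) = ((Δn/2)^{2q} - 1)/((Δn/2)^{2p} - 1). Define R(γ) = β((Δn)^{2p} s_{2p+1}(γ) - 1) - ((Δn)^{2q} s_{2q+1}(γ) - 1). Then there exists γ ∈ [-1/4, 0) with R(γ) = 0. -/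
/-!
The root comes from the intermediate value theorem on `[-1/4, 0]`. At `γ = 0` the recursion gives
`s m 0 = 1` for `m ≥ 1`, so the lower bound on `β` says `R 0 > 0`. At `γ = -1/4` the characteristic
equation `x² = x + γ` has the double root `1/2`, so `s (m + 1) (-1/4) = (1/2) ^ m`; the factor
`Δn ^ (2p)` becomes `(Δn / 2) ^ (2p)`, and the upper bound on `β` says `R (-1/4) ≤ 0`.
-/

noncomputable def s : ℕ → ℝ → ℝ
  | 0, _ => 2
  | 1, _ => 1
  | (m + 2), γ => s (m + 1) γ + γ * s m γ

theorem s_succ_zero (m : ℕ) : s (m + 1) 0 = 1 := by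
  induction m with
  | zero => simp [s]
  | succ k ih => simp [s, ih]

theorem s_neg_quarter (m : ℕ) : s m (-1/4) = 2 * (1/2) ^ m := by
  induction m using Nat.twoStepInduction with
  | zero => simp [s]
  | one => simp [s]
  | more k h1 h2 => rw [s, h1, h2]; ring

theorem s_continuous (m : ℕ) : Continuous (s m) := by
  induction m using Nat.twoStepInduction with
  | zero => exact (continuous_const : Continuous fun _ : ℝ => (2 : ℝ)).congr (by simp [s])
  | one => exact (continuous_const : Continuous fun _ : ℝ => (1 : ℝ)).congr (by simp [s])
  | more k h1 h2 =>
    exact (h2.add (continuous_id.mul h1)).congr (fun γ => by simp [s])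

theorem pow_mul_s_neg_quarter (x : ℝ) (k : ℕ) :
    x ^ (2 * k) * s (2 * k + 1) (-1/4) = (x / 2) ^ (2 * k) := by
  rw [s_neg_quarter, pow_succ, div_pow, div_pow, one_pow]
  ring

theorem stmt_9 (p q : ℕ) (hq : 1 ≤ q) (hpq : q < p) (Δn : ℕ) (hΔn : 3 ≤ Δn)
    (β : ℝ)
    (hβl : ((Δn : ℝ) ^ (2 * q) - 1) / ((Δn : ℝ) ^ (2 * p) - 1) < β)
    (hβu : β ≤ (((Δn : ℝ) / 2) ^ (2 * q) - 1) / (((Δn : ℝ) / 2) ^ (2 * p) - 1))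
    (R : ℝ → ℝ)
    (hR : ∀ γ, R γ = β * ((Δn : ℝ) ^ (2 * p) * s (2 * p + 1) γ - 1)
        - ((Δn : ℝ) ^ (2 * q) * s (2 * q + 1) γ - 1)) :
    ∃ γ ∈ Set.Ico (-1/4 : ℝ) 0, R γ = 0 := by
  have hx : (3 : ℝ) ≤ Δn := by exact_mod_cast hΔn
  have hp : 2 * p ≠ 0 := by omega
  have hd0 : 0 < (Δn : ℝ) ^ (2 * p) - 1 :=
    sub_pos.2 (one_lt_pow₀ (by linarith) hp)
  have hd1 : 0 < ((Δn : ℝ) / 2) ^ (2 * p) - 1 :=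
    sub_pos.2 (one_lt_pow₀ (by linarith) hp)
  have h0 : 0 < R 0 := by
    rw [hR, s_succ_zero, s_succ_zero]
    rw [div_lt_iff₀ hd0] at hβl
    linarith
  have h1 : R (-1/4) ≤ 0 := by
    rw [hR, pow_mul_s_neg_quarter, pow_mul_s_neg_quarter]
    rw [le_div_iff₀ hd1] at hβu
    linarith
  have hc : Continuous R := by
    have hp' := s_continuous (2 * p + 1)
    have hq' := s_continuous (2 * q + 1)
    rw [funext hR]
    fun_prop
  obtain ⟨γ, hγ, hz⟩ := intermediate_value_Ico (by norm_num : (-1/4 : ℝ) ≤ 0)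
    hc.continuousOn ⟨h1, h0⟩
  exact ⟨γ, hγ, hz⟩
end

section
/- Let p > q ≥ 1 be integers and define R(γ) = β(s_{2p+1}(γ) - 1) - (s_{2q+1}(γ) - 1), β_0 = (2q+1)/(2p+1), β_{-1/4} = (1 - 2^{-2q})/(1 - 2^{-2p}). Then: (i) if 0 < β < β_0, then R(γ) > 0 for all γ ∈ [-1/4, 0) and there exists γ₀ > 0 with R(γ₀) = 0; (ii) if β_0 < β < β_{-1/4}, then there exists γ ∈ (-1/4, 0) with R(γ) = 0; (iii) if β > β_{-1/4}, then R(γ) < 0 for all γ ∈ [-1/4, 0) and R(γ) > 0 for all γ > 0. -/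
/-- The partial sums of `s`; `s (n + 1) γ - 1 = γ * A n γ`. -/
noncomputable def A (n : ℕ) (γ : ℝ) : ℝ := ∑ i ∈ Finset.range n, s i γ

lemma A_succ (n : ℕ) (γ : ℝ) : A (n + 1) γ = A n γ + s n γ := Finset.sum_range_succ _ _

lemma A_zero (γ : ℝ) : A 0 γ = 0 := by simp [A]

lemma A_one (γ : ℝ) : A 1 γ = 2 := by simp [A, s]

lemma s_succ_eq (n : ℕ) (γ : ℝ) : s (n + 1) γ = 1 + γ * A n γ := by
  induction n with
  | zero => simp [A, s]
  | succ n ih => rw [s, ih, A_succ]; ring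

lemma continuous_s (n : ℕ) : Continuous (s n) := by
  induction n using Nat.twoStepInduction with
  | zero => exact (continuous_const : Continuous fun _ : ℝ => (2 : ℝ)).congr fun _ => by rw [s]
  | one => exact (continuous_const : Continuous fun _ : ℝ => (1 : ℝ)).congr fun _ => by rw [s]
  | more n h0 h1 => exact (h1.add (continuous_id.mul h0)).congr fun _ => by simp [s]

lemma continuous_A (n : ℕ) : Continuous (A n) :=
  continuous_finsetSum _ fun i _ => continuous_s i

lemma s_pos_and_le {γ : ℝ} (h : -1/4 ≤ γ) (n : ℕ) : 0 < s n γ ∧ s n γ ≤ 2 * s (n + 1) γ := by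
  induction n with
  | zero => simp [s]
  | succ n ih =>
    have e : s (n + 2) γ = s (n + 1) γ + γ * s n γ := by rw [s]
    refine ⟨by linarith [ih.1, ih.2], ?_⟩
    rw [e]
    nlinarith [ih.1, ih.2, mul_le_mul_of_nonneg_right h ih.1.le]

lemma A_nonneg {γ : ℝ} (h : -1/4 ≤ γ) (n : ℕ) : 0 ≤ A n γ :=
  Finset.sum_nonneg fun i _ => (s_pos_and_le h i).1.le

lemma A_mono {γ : ℝ} (h : -1/4 ≤ γ) {m n : ℕ} (hmn : m ≤ n) : A m γ ≤ A n γ :=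
  monotone_nat_of_le_succ (f := fun k => A k γ)
    (fun k => by linarith [A_succ k γ, (s_pos_and_le h k).1]) hmn

lemma A_pos {γ : ℝ} (h : -1/4 ≤ γ) {n : ℕ} (hn : 1 ≤ n) : 0 < A n γ := by
  linarith [A_mono h hn, A_one γ]

lemma A_le {γ : ℝ} (h : -1/4 ≤ γ) (n : ℕ) : A n γ ≤ (2 ^ (n + 1) - 2) * s n γ := by
  induction n with
  | zero => simp [A_zero]
  | succ n ih =>
    obtain ⟨-, h2⟩ := s_pos_and_le h n
    have h4 : (1 : ℝ) ≤ 2 ^ (n + 1) := one_le_pow₀ (by norm_num)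
    rw [A_succ, pow_succ]
    nlinarith [mul_le_mul_of_nonneg_left h2 (sub_nonneg.2 h4)]

lemma one_sub_pos {n : ℕ} (hn : 1 ≤ n) : 0 < 1 - ((2 : ℝ) ^ n)⁻¹ := by
  have h : (1 : ℝ) < 2 ^ n := one_lt_pow₀ (by norm_num) (by omega)
  linarith [inv_lt_one_of_one_lt₀ h]

lemma A_ratio_upper {γ : ℝ} (h : -1/4 ≤ γ) {m n : ℕ} (hm : 1 ≤ m) (hmn : m ≤ n) :
    A m γ / (1 - ((2 : ℝ) ^ m)⁻¹) ≤ A n γ / (1 - ((2 : ℝ) ^ n)⁻¹) := by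
  induction n, hmn using Nat.le_induction with
  | base => exact le_rfl
  | succ n hmn ih =>
    refine ih.trans ?_
    have hn : 1 ≤ n := hm.trans hmn
    rw [div_le_div_iff₀ (one_sub_pos hn) (one_sub_pos (by omega)), A_succ]
    have hA := A_le h n
    have hp : (0 : ℝ) < 2 ^ n := by positivity
    have e : ((2 : ℝ) ^ (n + 1))⁻¹ = ((2 : ℝ) ^ n)⁻¹ / 2 := by rw [pow_succ, mul_inv]; ring
    rw [e]
    have h1 : (2 : ℝ) ^ n * ((2 : ℝ) ^ n)⁻¹ = 1 := mul_inv_cancel₀ hp.ne'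
    have h2 := mul_le_mul_of_nonneg_right hA (inv_pos.2 hp).le
    have h3 : (2 ^ (n + 1) - 2) * s n γ * ((2 : ℝ) ^ n)⁻¹
        = 2 * s n γ * (1 - ((2 : ℝ) ^ n)⁻¹) := by
      rw [pow_succ]; linear_combination 2 * s n γ * h1
    linarith

lemma A_ge {γ : ℝ} (h : -1/4 ≤ γ) (h0 : γ ≤ 0) {n : ℕ} (hn : 1 ≤ n) :
    (n + 1) * s n γ ≤ A n γ := by
  induction n, hn using Nat.le_induction with
  | base => rw [A_one, s]; norm_num
  | succ n hn ih =>
    obtain ⟨k, rfl⟩ : ∃ k, n = k + 1 := ⟨n - 1, by omega⟩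
    have e : s (k + 2) γ = s (k + 1) γ + γ * s k γ := by rw [s]
    have h1 : s (k + 2) γ ≤ s (k + 1) γ := by
      linarith [mul_nonpos_of_nonpos_of_nonneg h0 (s_pos_and_le h k).1.le]
    rw [A_succ]
    have hk : (0 : ℝ) ≤ k + 3 := by positivity
    push_cast at ih ⊢
    nlinarith [mul_le_mul_of_nonneg_left h1 hk]

lemma A_ratio_lower {γ : ℝ} (h : -1/4 ≤ γ) (h0 : γ ≤ 0) {m n : ℕ} (hm : 1 ≤ m) (hmn : m ≤ n) :
    A n γ / (n + 1) ≤ A m γ / (m + 1) := by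
  induction n, hmn using Nat.le_induction with
  | base => exact le_rfl
  | succ n hmn ih =>
    refine le_trans ?_ ih
    rw [div_le_div_iff₀ (by positivity) (by positivity), A_succ]
    push_cast
    linarith [A_ge h h0 (hm.trans hmn)]

lemma A_at_zero {n : ℕ} (hn : 1 ≤ n) : A n 0 = n + 1 := by
  induction n, hn using Nat.le_induction with
  | base => rw [A_one]; norm_num
  | succ n hn ih =>
    obtain ⟨k, rfl⟩ : ∃ k, n = k + 1 := ⟨n - 1, by omega⟩
    rw [A_succ, ih, s_succ_eq]; push_cast; ring

lemma A_at_neg_quarter (n : ℕ) :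
    A n (-1/4) = 4 * (1 - ((2 : ℝ) ^ n)⁻¹) ∧ s n (-1/4) = 2 * ((2 : ℝ) ^ n)⁻¹ := by
  induction n with
  | zero => simp [A_zero, s]
  | succ n ih =>
    have e : ((2 : ℝ) ^ (n + 1))⁻¹ = ((2 : ℝ) ^ n)⁻¹ / 2 := by rw [pow_succ, mul_inv]; ring
    rw [A_succ, s_succ_eq, ih.1, ih.2, e]
    constructor <;> ring

lemma A_growth {γ : ℝ} (h : 0 ≤ γ) (n : ℕ) : (1 + γ) * A n γ ≤ A (n + 2) γ := by
  rw [A_succ, A_succ, s_succ_eq]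
  linarith [(s_pos_and_le (by linarith : -1/4 ≤ γ) n).1]

theorem stmt_12 (p q : ℕ) (hq : 1 ≤ q) (hpq : q < p) (β : ℝ)
    (R : ℝ → ℝ)
    (hR : ∀ γ, R γ = β * (s (2 * p + 1) γ - 1) - (s (2 * q + 1) γ - 1)) :
    ((0 < β ∧ β < (2 * q + 1 : ℝ) / (2 * p + 1)) →
      (∀ γ : ℝ, -1/4 ≤ γ → γ < 0 → 0 < R γ) ∧ ∃ γ₀ : ℝ, 0 < γ₀ ∧ R γ₀ = 0) ∧
    (((2 * q + 1 : ℝ) / (2 * p + 1) < β ∧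
        β < (1 - (2 : ℝ) ^ (-(2 * (q : ℤ)))) / (1 - (2 : ℝ) ^ (-(2 * (p : ℤ))))) →
      ∃ γ : ℝ, -1/4 < γ ∧ γ < 0 ∧ R γ = 0) ∧
    ((1 - (2 : ℝ) ^ (-(2 * (q : ℤ)))) / (1 - (2 : ℝ) ^ (-(2 * (p : ℤ)))) < β →
      (∀ γ : ℝ, -1/4 ≤ γ → γ < 0 → R γ < 0) ∧ (∀ γ : ℝ, 0 < γ → 0 < R γ)) := by
  have hz : ∀ k : ℕ, (2 : ℝ) ^ (-(2 * (k : ℤ))) = ((2 : ℝ) ^ (2 * k))⁻¹ := fun k => by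
    rw [zpow_neg]; norm_cast
  rw [hz, hz]
  have hq2 : 1 ≤ 2 * q := by omega
  have hp2 : 1 ≤ 2 * p := by omega
  have hqp2 : 2 * q ≤ 2 * p := by omega
  have hbp := one_sub_pos hp2
  have hbq := one_sub_pos hq2
  have hp0 : (0 : ℝ) < 2 * p + 1 := by positivity
  have hq0 : (0 : ℝ) < 2 * q + 1 := by positivity
  obtain ⟨G, hG⟩ : ∃ G : ℝ → ℝ, ∀ γ, G γ = β * A (2 * p) γ - A (2 * q) γ := ⟨_, fun _ => rfl⟩
  have hRG : ∀ γ, R γ = γ * G γ := fun γ => by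
    rw [hR, hG, s_succ_eq, s_succ_eq]; ring
  have hGc : Continuous G :=
    ((continuous_const.mul (continuous_A _)).sub (continuous_A _)).congr fun γ => (hG γ).symm
  have hG0 : G 0 = β * (2 * p + 1) - (2 * q + 1) := by
    rw [hG, A_at_zero hp2, A_at_zero hq2]; push_cast; ring
  refine ⟨?_, ?_, ?_⟩
  · rintro ⟨hβ, hβ'⟩
    rw [lt_div_iff₀ hp0] at hβ'
    refine ⟨fun γ h1 h2 => ?_, ?_⟩
    · have hr := A_ratio_lower h1 h2.le hq2 hqp2
      have hA := A_pos h1 hp2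
      push_cast at hr
      rw [div_le_div_iff₀ hp0 hq0] at hr
      have hneg : G γ < 0 := by
        rw [hG]
        have h3 := mul_lt_mul_of_pos_right hβ' hA
        have h4 : (β * A (2 * p) γ) * (2 * p + 1) < A (2 * q) γ * (2 * p + 1) := by linarith
        linarith [lt_of_mul_lt_mul_right h4 hp0.le]
      rw [hRG]; exact mul_pos_of_neg_of_neg h2 hneg
    · have hb : 0 < 1 / β := by positivity
      have hq4 : -1/4 ≤ 1 / β := by linarith
      have hend : 0 ≤ G (1 / β) := by
        have h1 := (A_growth hb.le (2 * q)).trans (A_mono hq4 (by omega : 2 * q + 2 ≤ 2 * p))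
        have h2 := mul_le_mul_of_nonneg_left h1 hβ.le
        have h3 : β * ((1 + 1 / β) * A (2 * q) (1 / β)) = (β + 1) * A (2 * q) (1 / β) := by
          field_simp
        rw [hG]
        nlinarith [mul_nonneg hβ.le (A_nonneg hq4 (2 * q))]
      obtain ⟨γ, hγ, hγ0⟩ := intermediate_value_Icc hb.le hGc.continuousOn
        (⟨by linarith, hend⟩ : (0 : ℝ) ∈ Set.Icc (G 0) (G (1 / β)))
      have hne : γ ≠ 0 := by rintro rfl; linarith
      exact ⟨γ, lt_of_le_of_ne hγ.1 hne.symm, by rw [hRG, hγ0, mul_zero]⟩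
  · rintro ⟨h1, h2⟩
    rw [div_lt_iff₀ hp0] at h1
    rw [lt_div_iff₀ hbp] at h2
    have hl : G (-1/4) < 0 := by
      rw [hG, (A_at_neg_quarter _).1, (A_at_neg_quarter _).1]; linarith
    obtain ⟨γ, hγ, hγ0⟩ := intermediate_value_Ioo (by norm_num : (-1/4 : ℝ) ≤ 0) hGc.continuousOn
      (⟨hl, by linarith⟩ : (0 : ℝ) ∈ Set.Ioo (G (-1/4)) (G 0))
    exact ⟨γ, hγ.1, hγ.2, by rw [hRG, hγ0, mul_zero]⟩
  · intro h
    rw [div_lt_iff₀ hbp] at h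
    have key : ∀ γ : ℝ, -1/4 ≤ γ → 0 < G γ := fun γ h1 => by
      have hr := A_ratio_upper h1 hq2 hqp2
      rw [div_le_div_iff₀ hbq hbp] at hr
      have h3 := mul_lt_mul_of_pos_right h (A_pos h1 hp2)
      have h4 : A (2 * q) γ * (1 - ((2 : ℝ) ^ (2 * p))⁻¹)
          < (β * A (2 * p) γ) * (1 - ((2 : ℝ) ^ (2 * p))⁻¹) := by linarith
      rw [hG]
      linarith [lt_of_mul_lt_mul_right h4 hbp.le]
    refine ⟨fun γ h1 h2 => ?_, fun γ h1 => ?_⟩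
    · rw [hRG]; exact mul_neg_of_neg_of_pos h2 (key γ h1)
    · rw [hRG]; exact mul_pos h1 (key γ (by linarith))
end
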